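/- In the octonions O = ℍ × ℍ with Cayley–Dickson multiplication, let i = (i, 0), j = (j, 0), and h = (1/2)·(i + j + k + e), where k = (k, 0) and e = (0, 1). Then the smallest subset of O containing {i, j, h} and closed under multiplication has exactly 240 elements, and every element (q, Q) of this set has norm 1, i.e., N(q) + N(Q) = 1 where N denotes the quaternion norm. (This set is the loop J' of integral Cayley numbers of unit norm; hence J' is generated multiplicatively by the three elements i, j, h.) -/

import Mathlib

open scoped Quaternion

/-- Octonion multiplication on `ℍ × ℍ` via the Cayley–Dickson process:
`(q, Q)·(r, R) = (qr − conj(R)Q, Rq + Q·conj(r))`. -/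
noncomputable def omul (x y : ℍ[ℝ] × ℍ[ℝ]) : ℍ[ℝ] × ℍ[ℝ] :=
  (x.1 * y.1 - star y.2 * x.2, y.2 * x.1 + x.2 * star y.1)

/-- The octonion unit `i = (i, 0)`. -/
noncomputable def oi : ℍ[ℝ] × ℍ[ℝ] := ((⟨0, 1, 0, 0⟩ : ℍ[ℝ]), 0)
/-- The octonion unit `j = (j, 0)`. -/
noncomputable def oj : ℍ[ℝ] × ℍ[ℝ] := ((⟨0, 0, 1, 0⟩ : ℍ[ℝ]), 0)
/-- The octonion unit `k = (k, 0)`. -/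
noncomputable def ok : ℍ[ℝ] × ℍ[ℝ] := ((⟨0, 0, 0, 1⟩ : ℍ[ℝ]), 0)
/-- The octonion unit `e = (0, 1)`. -/
noncomputable def oe : ℍ[ℝ] × ℍ[ℝ] := (0, 1)
/-- The integral Cayley number `h = (1/2)·(i + j + k + e)`. -/
noncomputable def oh : ℍ[ℝ] × ℍ[ℝ] := (1 / 2 : ℝ) • (oi + oj + ok + oe)

/-- The smallest subset of the octonions containing `{i, j, h}` and closed
under multiplication. -/
inductive OGen : ℍ[ℝ] × ℍ[ℝ] → Prop
  | mem_i : OGen oi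
  | mem_j : OGen oj
  | mem_h : OGen oh
  | mul : ∀ x y, OGen x → OGen y → OGen (omul x y)

structure V8 where
  a : ℤ
  b : ℤ
  c : ℤ
  d : ℤ
  e : ℤ
  f : ℤ
  g : ℤ
  h : ℤ

namespace V8

instance : DecidableEq V8 := fun u v =>
  decidable_of_iff (u.a = v.a ∧ u.b = v.b ∧ u.c = v.c ∧ u.d = v.d ∧ u.e = v.e ∧ u.f = v.f ∧
    u.g = v.g ∧ u.h = v.h) (by cases u; cases v; simp)

/-- The octonion whose doubled coordinates are the given integers. -/
noncomputable def toO (v : V8) : ℍ[ℝ] × ℍ[ℝ] :=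
  (⟨v.a / 2, v.b / 2, v.c / 2, v.d / 2⟩, ⟨v.e / 2, v.f / 2, v.g / 2, v.h / 2⟩)

/-- Sum of squares of the coordinates. -/
def nrm (v : V8) : ℤ :=
  v.a * v.a + v.b * v.b + v.c * v.c + v.d * v.d + v.e * v.e + v.f * v.f + v.g * v.g + v.h * v.h

/-- Octonion product of integer vectors. -/
def imul (u v : V8) : V8 :=
  ⟨u.a * v.a - u.b * v.b - u.c * v.c - u.d * v.d - u.e * v.e - u.f * v.f - u.g * v.g - u.h * v.h,
   u.a * v.b + u.b * v.a + u.c * v.d - u.d * v.c + u.e * v.f - u.f * v.e - u.g * v.h + u.h * v.g,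
   u.a * v.c - u.b * v.d + u.c * v.a + u.d * v.b + u.e * v.g + u.f * v.h - u.g * v.e - u.h * v.f,
   u.a * v.d + u.b * v.c - u.c * v.b + u.d * v.a + u.e * v.h - u.f * v.g + u.g * v.f - u.h * v.e,
   u.a * v.e - u.b * v.f - u.c * v.g - u.d * v.h + u.e * v.a + u.f * v.b + u.g * v.c + u.h * v.d,
   u.a * v.f + u.b * v.e - u.c * v.h + u.d * v.g - u.e * v.b + u.f * v.a - u.g * v.d + u.h * v.c,
   u.a * v.g + u.b * v.h + u.c * v.e - u.d * v.f - u.e * v.c + u.f * v.d + u.g * v.a - u.h * v.b,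
   u.a * v.h - u.b * v.g + u.c * v.f + u.d * v.e - u.e * v.d - u.f * v.c + u.g * v.b + u.h * v.a⟩

def half (v : V8) : V8 :=
  ⟨v.a / 2, v.b / 2, v.c / 2, v.d / 2, v.e / 2, v.f / 2, v.g / 2, v.h / 2⟩

def dbl (v : V8) : V8 :=
  ⟨2 * v.a, 2 * v.b, 2 * v.c, 2 * v.d, 2 * v.e, 2 * v.f, 2 * v.g, 2 * v.h⟩

/-- Lattice point (in doubled coordinates) with given coordinates in a lattice basis. -/
def P (c : V8) : V8 :=
  ⟨c.a, c.b, c.c, c.d, c.b + c.c + c.d + 2 * c.e, c.a + c.c + c.d + 2 * c.f, c.a + c.b + c.d + 2 * c.g, c.a + c.b + c.c + 2 * c.h⟩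

/-- The octonion product in terms of the lattice basis. -/
def cmul (u v : V8) : V8 :=
  ⟨u.a * (- v.a - v.b - v.c - v.d - v.f - v.g - v.h) +
    u.b * (- v.a - 2 * v.b - v.c - v.d - v.e - v.g - v.h) +
    u.c * (- v.a - v.b - 2 * v.c - v.d - v.e - v.f - v.h) +
    u.d * (- v.a - v.b - v.c - 2 * v.d - v.e - v.f - v.g) +
    u.e * (- v.b - v.c - v.d - 2 * v.e) +
    u.f * (- v.a - v.c - v.d - 2 * v.f) +
    u.g * (- v.a - v.b - v.d - 2 * v.g) +
    u.h * (- v.a - v.b - v.c - 2 * v.h),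
   u.a * (- v.c - v.e + v.g - v.h) +
    u.b * (v.a + v.d + v.f + v.g - v.h) +
    u.c * (v.a + v.d - v.e + v.f + v.g) +
    u.d * (- v.b - v.c - v.e + v.f - v.h) +
    u.e * (v.a + v.c + v.d + 2 * v.f) +
    u.f * (- v.b - v.c - v.d - 2 * v.e) +
    u.g * (- v.a - v.b - v.c - 2 * v.h) +
    u.h * (v.a + v.b + v.d + 2 * v.g),
   u.a * (- v.d - v.e - v.f + v.h) +
    u.b * (- v.c - v.d - v.e - v.f + v.g) +
    u.c * (v.a + v.b - v.f + v.g + v.h) +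
    u.d * (v.a + v.b - v.e + v.g + v.h) +
    u.e * (v.a + v.b + v.d + 2 * v.g) +
    u.f * (v.a + v.b + v.c + 2 * v.h) +
    u.g * (- v.b - v.c - v.d - 2 * v.e) +
    u.h * (- v.a - v.c - v.d - 2 * v.f),
   u.a * (- v.b - v.e + v.f - v.g) +
    u.b * (v.a + v.c - v.e + v.f + v.h) +
    u.c * (- v.b - v.d - v.e - v.g + v.h) +
    u.d * (v.a + v.c + v.f - v.g + v.h) +
    u.e * (v.a + v.b + v.c + 2 * v.h) +
    u.f * (- v.a - v.b - v.d - 2 * v.g) +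
    u.g * (v.a + v.c + v.d + 2 * v.f) +
    u.h * (- v.b - v.c - v.d - 2 * v.e),
   u.a * (v.b + v.c + v.d + 2 * v.e) +
    u.b * (- v.a + v.e - v.f - v.g) +
    u.c * (- v.a + v.e - v.g - v.h) +
    u.d * (- v.a + v.e - v.f - v.h) +
    u.e * (- v.a - v.b - v.c - v.d - v.f - v.g - v.h) +
    u.f * (v.b + v.d + v.e + v.g - v.h) +
    u.g * (v.b + v.c + v.e - v.f + v.h) +
    u.h * (v.c + v.d + v.e + v.f - v.g),
   u.a * (v.a + v.b + v.c + v.d + v.e + v.f + v.g) +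
    u.b * (v.b + v.c + v.d + 2 * v.e) +
    u.c * (v.c + v.d + v.e + v.f - v.h) +
    u.d * (v.d + v.e + v.g - v.h) +
    u.e * (- v.a - v.b + v.e - v.g - v.h) +
    u.f * (v.a + v.d + v.f + v.g - v.h) +
    u.g * (v.b + v.e - v.f + v.g) +
    u.h * (v.a + v.b + 2 * v.c + v.d + v.e + v.f + v.h),
   u.a * (v.a + v.b + v.c + v.d + v.e + v.g + v.h) +
    u.b * (v.b + v.e - v.f + v.h) +
    u.c * (v.b + v.c + v.d + 2 * v.e) +
    u.d * (v.b + v.d + v.e - v.f + v.g) +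
    u.e * (- v.a - v.c + v.e - v.f - v.h) +
    u.f * (v.a + v.b + v.c + 2 * v.d + v.e + v.f + v.g) +
    u.g * (v.a + v.b - v.f + v.g + v.h) +
    u.h * (v.c + v.e - v.g + v.h),
   u.a * (v.a + v.b + v.c + v.d + v.e + v.f + v.h) +
    u.b * (v.b + v.c + v.e - v.g + v.h) +
    u.c * (v.c + v.e + v.f - v.g) +
    u.d * (v.b + v.c + v.d + 2 * v.e) +
    u.e * (- v.a - v.d + v.e - v.f - v.g) +
    u.f * (v.d + v.e + v.f - v.h) +
    u.g * (v.a + 2 * v.b + v.c + v.d + v.e + v.g + v.h) +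
    u.h * (v.a + v.c + v.f - v.g + v.h)⟩

/-- Parity conditions describing the lattice. -/
def Par (w : V8) : Prop :=
  (w.e - (w.b + w.c + w.d)) % 2 = 0 ∧ (w.f - (w.a + w.c + w.d)) % 2 = 0 ∧ (w.g - (w.a + w.b + w.d)) % 2 = 0 ∧ (w.h - (w.a + w.b + w.c)) % 2 = 0

instance (w : V8) : Decidable (Par w) := by unfold Par; infer_instance

theorem par_P (c : V8) : Par (P c) := by
  simp only [Par, P]
  omega

theorem imul_P (u v : V8) : imul (P u) (P v) = dbl (P (cmul u v)) := by
  simp only [imul, P, dbl, cmul, V8.mk.injEq]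
  refine ⟨?_, ?_, ?_, ?_, ?_, ?_, ?_, ?_⟩ <;> ring

theorem nrm_imul (u v : V8) : nrm (imul u v) = nrm u * nrm v := by
  simp only [imul, nrm]
  ring

theorem nrm_dbl (u : V8) : nrm (dbl u) = 4 * nrm u := by
  simp only [dbl, nrm]
  ring

theorem toO_1_re (v : V8) : (toO v).1.re = (v.a : ℝ) / 2 := rfl
theorem toO_1_imI (v : V8) : (toO v).1.imI = (v.b : ℝ) / 2 := rfl
theorem toO_1_imJ (v : V8) : (toO v).1.imJ = (v.c : ℝ) / 2 := rfl
theorem toO_1_imK (v : V8) : (toO v).1.imK = (v.d : ℝ) / 2 := rfl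
theorem toO_2_re (v : V8) : (toO v).2.re = (v.e : ℝ) / 2 := rfl
theorem toO_2_imI (v : V8) : (toO v).2.imI = (v.f : ℝ) / 2 := rfl
theorem toO_2_imJ (v : V8) : (toO v).2.imJ = (v.g : ℝ) / 2 := rfl
theorem toO_2_imK (v : V8) : (toO v).2.imK = (v.h : ℝ) / 2 := rfl

theorem omul_toO (u v w : V8) (hw : imul u v = dbl w) : omul (toO u) (toO v) = toO w := by
  simp only [imul, dbl, V8.mk.injEq] at hw
  obtain ⟨h1, h2, h3, h4, h5, h6, h7, h8⟩ := hw
  have h1 := congrArg (Int.cast : ℤ → ℝ) h1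
  have h2 := congrArg (Int.cast : ℤ → ℝ) h2
  have h3 := congrArg (Int.cast : ℤ → ℝ) h3
  have h4 := congrArg (Int.cast : ℤ → ℝ) h4
  have h5 := congrArg (Int.cast : ℤ → ℝ) h5
  have h6 := congrArg (Int.cast : ℤ → ℝ) h6
  have h7 := congrArg (Int.cast : ℤ → ℝ) h7
  have h8 := congrArg (Int.cast : ℤ → ℝ) h8
  push_cast at h1 h2 h3 h4 h5 h6 h7 h8
  refine Prod.ext ?_ ?_ <;> ext <;> simp [omul, toO_1_re, toO_1_imI, toO_1_imJ, toO_1_imK, toO_2_re, toO_2_imI, toO_2_imJ, toO_2_imK,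
    Quaternion.re_mul, Quaternion.imI_mul,
    Quaternion.imJ_mul, Quaternion.imK_mul] <;> linarith

theorem toO_inj : Function.Injective toO := by
  intro u v h
  have key : ∀ m n : ℤ, (m : ℝ) / 2 = (n : ℝ) / 2 → m = n := by
    intro m n h
    have : (m : ℝ) = n := by linarith
    exact_mod_cast this
  have h1 := key _ _ (congrArg (fun x : ℍ[ℝ] × ℍ[ℝ] => x.1.re) h)
  have h2 := key _ _ (congrArg (fun x : ℍ[ℝ] × ℍ[ℝ] => x.1.imI) h)
  have h3 := key _ _ (congrArg (fun x : ℍ[ℝ] × ℍ[ℝ] => x.1.imJ) h)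
  have h4 := key _ _ (congrArg (fun x : ℍ[ℝ] × ℍ[ℝ] => x.1.imK) h)
  have h5 := key _ _ (congrArg (fun x : ℍ[ℝ] × ℍ[ℝ] => x.2.re) h)
  have h6 := key _ _ (congrArg (fun x : ℍ[ℝ] × ℍ[ℝ] => x.2.imI) h)
  have h7 := key _ _ (congrArg (fun x : ℍ[ℝ] × ℍ[ℝ] => x.2.imJ) h)
  have h8 := key _ _ (congrArg (fun x : ℍ[ℝ] × ℍ[ℝ] => x.2.imK) h)
  obtain ⟨_, _, _, _, _, _, _, _⟩ := u
  obtain ⟨_, _, _, _, _, _, _, _⟩ := v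
  simp only [V8.mk.injEq]
  exact ⟨h1, h2, h3, h4, h5, h6, h7, h8⟩

def gi : V8 := ⟨0, 2, 0, 0, 0, 0, 0, 0⟩
def gj : V8 := ⟨0, 0, 2, 0, 0, 0, 0, 0⟩
def gh : V8 := ⟨0, 1, 1, 1, 1, 0, 0, 0⟩

theorem toO_gi : toO gi = oi := by
  refine Prod.ext ?_ ?_ <;> ext <;> simp [toO, gi, oi]
theorem toO_gj : toO gj = oj := by
  refine Prod.ext ?_ ?_ <;> ext <;> simp [toO, gj, oj]
def gk : V8 := ⟨0, 0, 0, 2, 0, 0, 0, 0⟩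
def ge : V8 := ⟨0, 0, 0, 0, 2, 0, 0, 0⟩
theorem toO_gk : toO gk = ok := by
  refine Prod.ext ?_ ?_ <;> ext <;> simp [toO, gk, ok]
theorem toO_ge : toO ge = oe := by
  refine Prod.ext ?_ ?_ <;> ext <;> simp [toO, ge, oe]
theorem toO_gh : toO gh = oh := by
  rw [oh, ← toO_gi, ← toO_gj, ← toO_gk, ← toO_ge]
  refine Prod.ext ?_ ?_ <;> ext <;> simp [toO_1_re, toO_1_imI, toO_1_imJ, toO_1_imK, toO_2_re, toO_2_imI, toO_2_imJ, toO_2_imK,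
    gi, gj, gk, ge, gh]

theorem lattice_of_gen {x : ℍ[ℝ] × ℍ[ℝ]} (hx : OGen x) :
    ∃ c : V8, x = toO (P c) ∧ nrm (P c) = 4 := by
  induction hx with
  | mem_i => exact ⟨⟨0, 2, 0, 0, -1, 0, -1, -1⟩, by rw [← toO_gi]; rfl, by decide⟩
  | mem_j => exact ⟨⟨0, 0, 2, 0, -1, -1, 0, -1⟩, by rw [← toO_gj]; rfl, by decide⟩
  | mem_h => exact ⟨⟨0, 1, 1, 1, -1, -1, -1, -1⟩, by rw [← toO_gh]; rfl, by decide⟩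
  | mul x y _ _ ihx ihy =>
    obtain ⟨c, rfl, hc⟩ := ihx
    obtain ⟨d, rfl, hd⟩ := ihy
    refine ⟨cmul c d, omul_toO _ _ _ (imul_P c d), ?_⟩
    have h := nrm_imul (P c) (P d)
    rw [imul_P, nrm_dbl, hc, hd] at h
    linarith

/-- All integer lists of the given length and given sum of squares (at most `4`). -/
def enum : ℕ → ℕ → List (List ℤ)
  | 0, 0 => [[]]
  | 0, _ + 1 => []
  | n + 1, 0 => (enum n 0).map (0 :: ·)
  | n + 1, 4 => (enum n 4).map (0 :: ·) ++ (enum n 3).map (1 :: ·) ++ (enum n 3).map (-1 :: ·) ++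
      (enum n 0).map (2 :: ·) ++ (enum n 0).map (-2 :: ·)
  | n + 1, m + 1 => (enum n (m + 1)).map (0 :: ·) ++ (enum n m).map (1 :: ·) ++
      (enum n m).map (-1 :: ·)

theorem mem_enum : ∀ (l : List ℤ) (m : ℕ), (l.map fun c => c * c).sum = m → m ≤ 4 →
    l ∈ enum l.length m := by
  intro l
  induction l with
  | nil =>
    intro m h _
    have h0 : m = 0 := by simpa using h.symm
    subst h0
    simp [enum]
  | cons c l ih =>
    intro m h hm
    simp only [List.map_cons, List.sum_cons] at h
    have hnn : 0 ≤ (l.map fun c => c * c).sum := by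
      apply List.sum_nonneg
      intro x hx
      obtain ⟨y, _, rfl⟩ := List.mem_map.1 hx
      exact mul_self_nonneg y
    have hm' : (m : ℤ) ≤ 4 := by exact_mod_cast hm
    have hc1 : -2 ≤ c := by nlinarith
    have hc2 : c ≤ 2 := by nlinarith
    have key : ∀ k : ℕ, c * c + k = m → l ∈ enum l.length k := by
      intro k hk
      refine ih k (by linarith) ?_
      have := mul_self_nonneg c
      omega
    interval_cases c <;> interval_cases m <;> first
      | (exfalso; norm_num at h; omega)
      | (have h0 := key 0 (by norm_num); simp [enum, h0]; done)
      | (have h0 := key 1 (by norm_num); simp [enum, h0]; done)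
      | (have h0 := key 2 (by norm_num); simp [enum, h0]; done)
      | (have h0 := key 3 (by norm_num); simp [enum, h0]; done)
      | (have h0 := key 4 (by norm_num); simp [enum, h0]; done)

def ofList : List ℤ → V8
  | [a, b, c, d, e, f, g, h] => ⟨a, b, c, d, e, f, g, h⟩
  | _ => ⟨0, 0, 0, 0, 0, 0, 0, 0⟩

def roots : List V8 := ((enum 8 4).map ofList).filter fun w => decide (Par w)

theorem mem_roots (v : V8) (hp : Par v) (hn : nrm v = 4) : v ∈ roots := by
  refine List.mem_filter.2 ⟨List.mem_map.2
    ⟨[v.a, v.b, v.c, v.d, v.e, v.f, v.g, v.h], mem_enum _ _ ?_ le_rfl, rfl⟩, by simpa using hp⟩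
  push_cast
  rw [← hn]
  simp [nrm]
  ring

/-- One step of a straight-line program: append the product of two earlier entries (if the
product is again a half-integral vector). -/
def step (L : List V8) (p : ℕ × ℕ) : List V8 :=
  let u := L.getD p.1 gi
  let v := L.getD p.2 gi
  let w := imul u v
  let t := half w
  if w = dbl t then L ++ [t] else L

/-- A straight-line program producing all units from the three generators. -/
def prog : List (ℕ × ℕ) :=
  [(0, 0), (1, 0), (0, 1), (2, 0), (0, 2), (2, 1), (1, 2), (3, 0), (3, 1), (3, 2),
   (3, 3), (4, 2), (2, 4), (5, 2), (2, 5), (0, 6), (6, 1), (1, 6), (6, 2), (6, 3),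
   (6, 4), (4, 6), (6, 5), (5, 6), (7, 1), (1, 7), (7, 3), (7, 4), (4, 7), (7, 5),
   (5, 7), (8, 0), (0, 8), (1, 8), (8, 2), (8, 3), (8, 4), (4, 8), (8, 5), (5, 8),
   (8, 6), (6, 8), (8, 7), (7, 8), (9, 0), (0, 9), (9, 3), (9, 4), (4, 9), (9, 5),
   (5, 9), (9, 6), (6, 9), (9, 7), (7, 9), (10, 8), (9, 10), (11, 6), (7, 11), (14, 0),
   (14, 1), (14, 6), (14, 7), (7, 14), (14, 8), (14, 9), (9, 14), (14, 10), (14, 11), (0, 15),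
   (1, 15), (15, 6), (6, 15), (7, 15), (15, 8), (8, 15), (9, 15), (10, 15), (11, 15), (16, 7),
   (7, 16), (16, 9), (9, 16), (17, 6), (6, 17), (17, 8), (8, 17), (19, 2), (19, 4), (4, 19),
   (19, 5), (5, 19), (19, 7), (19, 9), (19, 12), (19, 14), (14, 19), (19, 15), (15, 19), (19, 16),
   (16, 19), (19, 17), (17, 19), (18, 19), (4, 20), (5, 20), (7, 20), (8, 20), (9, 20), (20, 12),
   (20, 15), (15, 20), (20, 17), (17, 20), (20, 18), (21, 19), (20, 21), (22, 8), (8, 22), (1, 23),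
   (23, 2), (23, 7), (23, 8), (8, 23), (23, 9), (11, 23), (23, 12), (18, 23), (19, 23), (21, 23),
   (7, 24), (24, 8), (8, 24), (14, 24), (15, 24), (17, 24), (24, 18), (24, 20), (20, 24), (24, 21),
   (21, 24), (25, 7), (8, 25), (25, 9), (25, 19), (7, 26), (8, 26), (26, 20), (20, 26), (27, 8),
   (27, 19), (27, 22), (24, 27), (26, 27), (28, 15), (15, 28), (28, 17), (17, 28), (28, 18), (28, 21),
   (28, 23), (28, 25), (29, 9), (30, 15), (30, 17), (30, 27), (27, 30), (8, 31), (31, 18), (31, 21),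
   (28, 31), (32, 27), (27, 32), (8, 33), (35, 15), (15, 35), (35, 17), (17, 35), (20, 35), (35, 27),
   (35, 31), (35, 33), (36, 23), (23, 36), (36, 25), (25, 36), (35, 36), (35, 37), (38, 20), (39, 2),
   (39, 6), (6, 39), (39, 9), (39, 12), (39, 18), (18, 39), (39, 21), (21, 39), (39, 22), (22, 39),
   (39, 27), (28, 39), (39, 29), (39, 30), (31, 39), (39, 32), (33, 39), (9, 40), (15, 40), (17, 40),
   (30, 40), (40, 31), (32, 40), (40, 33), (41, 9), (41, 27), (28, 41), (9, 42), (43, 33), (43, 39),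
   (43, 41), (44, 19), (44, 34), (46, 14), (46, 16), (20, 46), (23, 46), (25, 46), (46, 27), (35, 46),
   (39, 46), (41, 46), (46, 47), (64, 35), (39, 64), (41, 64), (47, 64)]

def units : List V8 := prog.foldl step [gi, gj, gh]

theorem getD_gen (L : List V8) (hL : ∀ v ∈ L, OGen (toO v)) (n : ℕ) :
    OGen (toO (L.getD n gi)) := by
  rw [List.getD_eq_getElem?_getD]
  rcases h : L[n]? with _ | v
  · simpa [toO_gi] using OGen.mem_i
  · exact hL _ (List.mem_of_getElem? h)

theorem step_gen (L : List V8) (hL : ∀ v ∈ L, OGen (toO v)) (p : ℕ × ℕ) :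
    ∀ v ∈ step L p, OGen (toO v) := by
  intro v hv
  simp only [step] at hv
  split_ifs at hv with h
  · rcases List.mem_append.1 hv with h' | h'
    · exact hL _ h'
    · rw [List.mem_singleton.1 h', ← omul_toO _ _ _ h]
      exact OGen.mul _ _ (getD_gen L hL _) (getD_gen L hL _)
  · exact hL _ hv

theorem foldl_gen (ps : List (ℕ × ℕ)) : ∀ L : List V8, (∀ v ∈ L, OGen (toO v)) →
    ∀ v ∈ ps.foldl step L, OGen (toO v) := by
  induction ps with
  | nil => intro L hL; exact hL
  | cons p ps ih => intro L hL; exact ih _ (step_gen L hL p)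

theorem units_gen : ∀ v ∈ units, OGen (toO v) := by
  apply foldl_gen
  intro v hv
  simp only [List.mem_cons, List.not_mem_nil, or_false] at hv
  rcases hv with rfl | rfl | rfl
  · rw [toO_gi]; exact OGen.mem_i
  · rw [toO_gj]; exact OGen.mem_j
  · rw [toO_gh]; exact OGen.mem_h

/-- A numerical code for a vector with small entries (base `5` digits). -/
def enc (v : V8) : ℕ :=
  [v.a, v.b, v.c, v.d, v.e, v.f, v.g, v.h].foldl (fun n z => 5 * n + (z + 2).toNat) 0

set_option maxRecDepth 100000 in
theorem units_codes : units.length = 240 ∧ (units.map enc).Nodup := by decide +kernel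

set_option maxRecDepth 100000 in
theorem roots_length : roots.length = 240 := by decide +kernel

theorem units_length : units.length = 240 := units_codes.1

theorem units_nodup : units.Nodup := List.Nodup.of_map enc units_codes.2

theorem units_subset : units ⊆ roots := by
  intro v hv
  obtain ⟨c, hc, hn⟩ := lattice_of_gen (units_gen v hv)
  rw [toO_inj hc]
  exact mem_roots _ (par_P c) hn

theorem roots_subset : ∀ v ∈ roots, v ∈ units := by
  have hsub : units.toFinset ⊆ roots.toFinset := by
    intro v hv
    exact List.mem_toFinset.2 (units_subset (List.mem_toFinset.1 hv))
  have heq : units.toFinset = roots.toFinset := by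
    apply Finset.eq_of_subset_of_card_le hsub
    rw [List.toFinset_card_of_nodup units_nodup, units_length, ← roots_length]
    exact List.toFinset_card_le roots
  intro v hv
  rw [← List.mem_toFinset, heq]
  exact List.mem_toFinset.2 hv

theorem gen_iff (x : ℍ[ℝ] × ℍ[ℝ]) : OGen x ↔ ∃ v ∈ units, toO v = x := by
  constructor
  · intro hx
    obtain ⟨c, rfl, hc⟩ := lattice_of_gen hx
    exact ⟨P c, roots_subset _ (mem_roots _ (par_P c) hc), rfl⟩
  · rintro ⟨v, hv, rfl⟩
    exact units_gen v hv

end V8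

/-- The multiplicative closure of `{i, j, h}` in the octonions has exactly
`240` elements, all of norm `1`: it is the loop `J'` of integral Cayley
numbers of unit norm, generated by the three elements `i, j, h`. -/
theorem integral_cayley_unit_norm_three_generated :
    Nat.card {x : ℍ[ℝ] × ℍ[ℝ] // OGen x} = 240 ∧
    ∀ x : ℍ[ℝ] × ℍ[ℝ], OGen x →
      Quaternion.normSq x.1 + Quaternion.normSq x.2 = 1 := by
  constructor
  · have hset : {x : ℍ[ℝ] × ℍ[ℝ] | OGen x} = Set.image V8.toO (V8.units.toFinset : Set V8) := by
      ext x
      simp [V8.gen_iff]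
    change Nat.card ({x : ℍ[ℝ] × ℍ[ℝ] | OGen x} : Set _) = 240
    rw [hset, Nat.card_image_of_injective V8.toO_inj, Nat.card_coe_set_eq, Set.ncard_coe_finset,
      List.toFinset_card_of_nodup V8.units_nodup, V8.units_length]
  · intro x hx
    obtain ⟨c, rfl, hc⟩ := V8.lattice_of_gen hx
    generalize V8.P c = v at hc
    have h := congrArg (Int.cast : ℤ → ℝ) hc
    simp only [V8.nrm] at h
    push_cast at h
    simp only [Quaternion.normSq_def', V8.toO_1_re, V8.toO_1_imI, V8.toO_1_imJ, V8.toO_1_imK, V8.toO_2_re, V8.toO_2_imI, V8.toO_2_imJ, V8.toO_2_imK]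
    linarith
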